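/- Let α > 0, β > 0, L = 2π/α, M ≥ 1, and let γ ≥ 1 be real. Let V : ℝ → Matrix(M, M, ℂ) be continuous and L-periodic with V(x) Hermitian and positive semidefinite for every x. Suppose φ_1, …, φ_N : ℝ → ℂ^M are C² functions, L-periodic, orthonormal in L²((0, L); ℂ^M), and for each n there is λ_n > 0 such that −φ_n''(x) + α² β φ_n(x) − V(x) φ_n(x) = −λ_n φ_n(x) for all x. Then ∑_{n=1}^N λ_n^γ ≤ (π/√3) · K₁(β) · (Γ(γ+1)/(2√π · Γ(γ+3/2))) · ∫_0^L Tr[V(x)^{γ + 1/2}] dx. -/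

import Mathlib

open Real MeasureTheory ComplexOrder

/-- The sharp constant `K₁(β) = sup_{λ>0} √λ · coth(π√(β+λ)) / √(β+λ)`. -/
noncomputable def K1 (β : ℝ) : ℝ :=
  ⨆ l : Set.Ioi (0 : ℝ),
    Real.sqrt l * (Real.cosh (π * Real.sqrt (β + l)) / Real.sinh (π * Real.sqrt (β + l))) /
      Real.sqrt (β + l)

/-!
Multiplying `‖f‖²` by the solution `m tanh(m(x - c))` of the Riccati equation `g' = m² - g²` and
integrating over a period gives the periodic Sobolev inequality
`2m tanh(mL/2) ‖f(a)‖² ≤ ∫ ‖f'‖² + m² ‖f‖²`. Optimising over `m` yields the interpolation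
inequality `‖f(a)‖⁴ ≤ K₁² ‖f‖² ⟨f, (-d²/dx² + α²β) f⟩`.

For an orthonormal family `φₙ` and a unit vector `e`, this inequality applied to
`f = ∑ₙ ⟨φₙ(x), e⟩ φₙ` bounds the cube of the density `ρₑ(x) = ∑ₙ |⟨e, φₙ(x)⟩|²`. Letting `e` run
through an eigenbasis of `V(x)` and using Young's inequality for `(vₖ - t)₊ ρₖ`, the energies cancel
after integration, which is the case `γ = 1` for `V - t`:
`∑ₙ (λₙ - t)₊ ≤ 2K₁/(3√3) ∫ Tr (V - t)₊^(3/2)`. Following Aizenman and Lieb, integrating this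
against `t^(γ-2) dt` over `(0, ∞)` raises both exponents by `γ - 1`, by the Beta integral.
-/

open scoped InnerProductSpace

section PeriodicSobolev

theorem periodic_deriv {F : Type*} [NormedAddCommGroup F] [NormedSpace ℝ F] {f : ℝ → F} {L : ℝ}
    (hper : Function.Periodic f L) : Function.Periodic (deriv f) L := fun x => by
  rw [← deriv_comp_add_const, funext hper]

variable {E : Type*} [NormedAddCommGroup E] [InnerProductSpace ℝ E] {f : ℝ → E} {L m : ℝ}

theorem riccati_mul_norm_sq_add_inner_le (g : ℝ) (u v : E) :
    (m ^ 2 - g ^ 2) * ‖u‖ ^ 2 + g * (2 * ⟪u, v⟫_ℝ) ≤ ‖v‖ ^ 2 + m ^ 2 * ‖u‖ ^ 2 := by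
  have hsq : ‖v - g • u‖ ^ 2 = ‖v‖ ^ 2 - 2 * (g * ⟪u, v⟫_ℝ) + g ^ 2 * ‖u‖ ^ 2 := by
    rw [norm_sub_sq_real, inner_smul_right, real_inner_comm, norm_smul, mul_pow, norm_eq_abs,
      sq_abs]
  linarith [sq_nonneg ‖v - g • u‖]

theorem hasDerivAt_mul_tanh (m c x : ℝ) :
    HasDerivAt (fun y => m * tanh (m * (y - c))) (m ^ 2 - (m * tanh (m * (x - c))) ^ 2) x := by
  have harg : HasDerivAt (fun y => m * (y - c)) m x := by
    simpa using ((hasDerivAt_id x).sub_const c).const_mul m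
  have hne := (cosh_pos (m * (x - c))).ne'
  simp only [tanh_eq_sinh_div_cosh]
  refine ((harg.sinh.div harg.cosh hne).const_mul m).congr_deriv ?_
  field_simp

theorem tanh_mul_norm_sq_le_integral (hf : ContDiff ℝ 1 f) (hper : Function.Periodic f L)
    (hL : 0 ≤ L) (a : ℝ) :
    2 * m * tanh (m * L / 2) * ‖f a‖ ^ 2 ≤
      ∫ x in 0..L, (‖deriv f x‖ ^ 2 + m ^ 2 * ‖f x‖ ^ 2) := by
  have := hf.continuous
  have := hf.continuous_deriv le_rfl
  set g : ℝ → ℝ := fun x => m * tanh (m * (x - (a + L / 2))) with hg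
  have hg' (x : ℝ) : HasDerivAt g (m ^ 2 - g x ^ 2) x := hasDerivAt_mul_tanh m (a + L / 2) x
  have hgc : Continuous g := continuous_iff_continuousAt.2 fun x => (hg' x).continuousAt
  have hderiv (x : ℝ) : HasDerivAt (fun x => g x * ‖f x‖ ^ 2)
      ((m ^ 2 - g x ^ 2) * ‖f x‖ ^ 2 + g x * (2 * ⟪f x, deriv f x⟫_ℝ)) x :=
    (hg' x).mul (hf.differentiable one_ne_zero x).hasDerivAt.norm_sq
  have hshift : ∫ x in 0..L, (‖deriv f x‖ ^ 2 + m ^ 2 * ‖f x‖ ^ 2) =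
      ∫ x in a..a + L, (‖deriv f x‖ ^ 2 + m ^ 2 * ‖f x‖ ^ 2) := by
    have hP : Function.Periodic (fun x => ‖deriv f x‖ ^ 2 + m ^ 2 * ‖f x‖ ^ 2) L := fun x => by
      simp only [hper x, periodic_deriv hper x]
    simpa only [zero_add] using hP.intervalIntegral_add_eq 0 a
  calc 2 * m * tanh (m * L / 2) * ‖f a‖ ^ 2
      = g (a + L) * ‖f (a + L)‖ ^ 2 - g a * ‖f a‖ ^ 2 := by
        simp only [hper a, hg, show m * (a + L - (a + L / 2)) = m * L / 2 by ring,
          show m * (a - (a + L / 2)) = -(m * L / 2) by ring, tanh_neg]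
        ring
    _ = ∫ x in a..a + L, ((m ^ 2 - g x ^ 2) * ‖f x‖ ^ 2 + g x * (2 * ⟪f x, deriv f x⟫_ℝ)) :=
        (intervalIntegral.integral_eq_sub_of_hasDerivAt (fun x _ => hderiv x)
          (Continuous.intervalIntegrable (by fun_prop) _ _)).symm
    _ ≤ ∫ x in a..a + L, (‖deriv f x‖ ^ 2 + m ^ 2 * ‖f x‖ ^ 2) :=
        intervalIntegral.integral_mono_on (by linarith)
          (Continuous.intervalIntegrable (by fun_prop) _ _)
          (Continuous.intervalIntegrable (by fun_prop) _ _)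
          fun x _ => riccati_mul_norm_sq_add_inner_le (g x) (f x) (deriv f x)
    _ = _ := hshift.symm

end PeriodicSobolev

section SharpConstant

variable {α β : ℝ}

theorem coth_le_of_le {x y : ℝ} (hx : 0 < x) (hxy : x ≤ y) :
    cosh y / sinh y ≤ 1 + 1 / sinh x := by
  have hsinh : 0 < sinh x := sinh_pos_iff.2 hx
  have hle : sinh x ≤ sinh y := sinh_le_sinh.2 hxy
  have hcosh : cosh y ≤ sinh y + 1 := by
    have hexp : rexp (-y) ≤ 1 := exp_le_one_iff.2 (by linarith)
    linarith [cosh_sub_sinh y]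
  calc cosh y / sinh y ≤ (sinh y + 1) / sinh y := by
        have := hsinh.trans_le hle
        gcongr
    _ = 1 + 1 / sinh y := by rw [add_div, div_self (hsinh.trans_le hle).ne']
    _ ≤ 1 + 1 / sinh x := by gcongr

theorem le_K1 (hβ : 0 < β) {l : ℝ} (hl : 0 < l) :
    √l * (cosh (π * √(β + l)) / sinh (π * √(β + l))) / √(β + l) ≤ K1 β := by
  refine le_ciSup (f := fun l : Set.Ioi (0 : ℝ) =>
    √l * (cosh (π * √(β + l)) / sinh (π * √(β + l))) / √(β + l))
    ⟨1 + 1 / sinh (π * √β), ?_⟩ ⟨l, hl⟩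
  rintro _ ⟨⟨l, hl : 0 < l⟩, rfl⟩
  have : 0 < sinh (π * √β) := sinh_pos_iff.2 (by positivity)
  have hcoth := coth_le_of_le (x := π * √β) (y := π * √(β + l)) (by positivity)
    (by gcongr; linarith)
  have hsqrt : √l ≤ √(β + l) := sqrt_le_sqrt (by linarith)
  rw [div_le_iff₀ (by positivity), mul_comm]
  exact mul_le_mul hcoth hsqrt (by positivity) (by positivity)

theorem K1_pos (hβ : 0 < β) : 0 < K1 β := by
  refine lt_of_lt_of_le ?_ (le_K1 hβ one_pos)
  have : 0 < sinh (π * √(β + 1)) := sinh_pos_iff.2 (by positivity)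
  positivity

variable {E : Type*} [NormedAddCommGroup E] [InnerProductSpace ℝ E] {f : ℝ → E}

theorem norm_sq_le_K1_mul_integral (hα : 0 < α) (hβ : 0 < β) (hf : ContDiff ℝ 1 f)
    (hper : Function.Periodic f (2 * π / α)) {s : ℝ} (hs : 0 < s) (a : ℝ) :
    ‖f a‖ ^ 2 ≤ K1 β / (2 * s) *
      ∫ x in 0..2 * π / α, (‖deriv f x‖ ^ 2 + (α ^ 2 * β + s ^ 2) * ‖f x‖ ^ 2) := by
  set l := s ^ 2 / α ^ 2 with hl
  set r := √(β + l)
  set I := ∫ x in 0..2 * π / α, (‖deriv f x‖ ^ 2 + (α ^ 2 * β + s ^ 2) * ‖f x‖ ^ 2)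
  have hl_pos : 0 < l := by positivity
  have hr_pos : 0 < r := by positivity
  have hsqrt_l : √l = s / α := by rw [hl, ← div_pow, sqrt_sq (by positivity)]
  have hαr : (α * r) ^ 2 = α ^ 2 * β + s ^ 2 := by
    rw [mul_pow, sq_sqrt (by positivity), hl]
    field_simp
  have : 0 < sinh (π * r) := sinh_pos_iff.2 (by positivity)
  have : 0 < cosh (π * r) := cosh_pos _
  have hsobolev : 2 * (α * r) * (sinh (π * r) / cosh (π * r)) * ‖f a‖ ^ 2 ≤ I := by
    have h := tanh_mul_norm_sq_le_integral (m := α * r) hf hper (by positivity) a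
    rwa [show α * r * (2 * π / α) / 2 = π * r by field_simp, hαr, tanh_eq_sinh_div_cosh] at h
  have hK_pos := K1_pos hβ
  have hK := le_K1 hβ hl_pos
  rw [hsqrt_l] at hK
  calc ‖f a‖ ^ 2
      = (s / α * (cosh (π * r) / sinh (π * r)) / r) / (2 * s) *
          (2 * (α * r) * (sinh (π * r) / cosh (π * r)) * ‖f a‖ ^ 2) := by field_simp
    _ ≤ K1 β / (2 * s) * I := by gcongr

end SharpConstant

section EnergyForm

variable {E : Type*} [NormedAddCommGroup E] [InnerProductSpace ℂ E] {ι : Type*} [Fintype ι]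
  {f g : ℝ → E} {α β κ L : ℝ}

/-- The inner product of `L²((0, L); E)`, antilinear in the first argument. -/
noncomputable def l2Inner (L : ℝ) (f g : ℝ → E) : ℂ :=
  ∫ x in 0..L, ⟪f x, g x⟫_ℂ

/-- The sesquilinear form `⟨f', g'⟩ + κ ⟨f, g⟩` of the operator `-d²/dx² + κ` on `L²((0, L); E)`. -/
noncomputable def energyForm (κ L : ℝ) (f g : ℝ → E) : ℂ :=
  l2Inner L (deriv f) (deriv g) + κ * l2Inner L f g

theorem re_l2Inner_self (L : ℝ) (f : ℝ → E) : (l2Inner L f f).re = ∫ x in 0..L, ‖f x‖ ^ 2 := by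
  simp only [l2Inner, inner_self_eq_norm_sq_to_K, ← RCLike.ofReal_pow]
  exact congrArg Complex.re intervalIntegral.integral_ofReal

theorem re_energyForm_self (κ L : ℝ) (f : ℝ → E) :
    (energyForm κ L f f).re =
      (∫ x in 0..L, ‖deriv f x‖ ^ 2) + κ * ∫ x in 0..L, ‖f x‖ ^ 2 := by
  rw [energyForm, Complex.add_re, Complex.re_ofReal_mul, re_l2Inner_self, re_l2Inner_self]

theorem re_energyForm_self_nonneg (hκ : 0 ≤ κ) (hL : 0 ≤ L) (f : ℝ → E) :
    0 ≤ (energyForm κ L f f).re := by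
  rw [re_energyForm_self]
  exact add_nonneg (intervalIntegral.integral_nonneg hL fun x _ => by positivity)
    (mul_nonneg hκ (intervalIntegral.integral_nonneg hL fun x _ => by positivity))

theorem l2Inner_sum_smul {φ : ι → ℝ → E} (hφ : ∀ n, Continuous (φ n)) (ξ : ι → ℂ) :
    l2Inner L (fun x => ∑ n, ξ n • φ n x) (fun x => ∑ n, ξ n • φ n x) =
      ∑ i, ∑ j, (starRingEnd ℂ) (ξ i) * ξ j * l2Inner L (φ i) (φ j) := by
  simp only [l2Inner, sum_inner, inner_sum, inner_smul_left, inner_smul_right, Finset.mul_sum,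
    ← intervalIntegral.integral_const_mul]
  rw [Finset.sum_comm, intervalIntegral.integral_finsetSum fun i _ =>
    Continuous.intervalIntegrable (by fun_prop) _ _]
  refine Finset.sum_congr rfl fun j _ => ?_
  rw [intervalIntegral.integral_finsetSum fun i _ =>
    Continuous.intervalIntegrable (by fun_prop) _ _]
  simp only [mul_left_comm, mul_assoc]

theorem energyForm_sum_smul {φ : ι → ℝ → E} (hφ : ∀ n, ContDiff ℝ 1 (φ n)) (ξ : ι → ℂ) :
    energyForm κ L (fun x => ∑ n, ξ n • φ n x) (fun x => ∑ n, ξ n • φ n x) =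
      ∑ i, ∑ j, (starRingEnd ℂ) (ξ i) * ξ j * energyForm κ L (φ i) (φ j) := by
  have hderiv : deriv (fun x => ∑ n, ξ n • φ n x) = fun x => ∑ n, ξ n • deriv (φ n) x :=
    funext fun x => (HasDerivAt.fun_sum fun n _ =>
      ((hφ n).differentiable one_ne_zero x).hasDerivAt.const_smul (ξ n)).deriv
  simp only [energyForm, hderiv, l2Inner_sum_smul fun n => (hφ n).continuous_deriv le_rfl,
    l2Inner_sum_smul fun n => (hφ n).continuous, mul_add, Finset.sum_add_distrib, Finset.mul_sum]
  simp only [mul_left_comm]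

theorem l2Inner_deriv_deriv_of_periodic (hf : ContDiff ℝ 1 f) (hg : ContDiff ℝ 2 g)
    (hfper : Function.Periodic f L) (hgper : Function.Periodic g L) :
    l2Inner L (deriv f) (deriv g) = -l2Inner L f (deriv (deriv g)) := by
  have hg' : ContDiff ℝ 1 (deriv g) := hg.deriv'
  have := hf.continuous
  have := hf.continuous_deriv le_rfl
  have := hg'.continuous
  have := hg'.continuous_deriv le_rfl
  have hderiv (x : ℝ) : HasDerivAt (fun x => ⟪f x, deriv g x⟫_ℂ)
      (⟪f x, deriv (deriv g) x⟫_ℂ + ⟪deriv f x, deriv g x⟫_ℂ) x :=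
    (hf.differentiable one_ne_zero x).hasDerivAt.inner ℂ
      (hg'.differentiable one_ne_zero x).hasDerivAt
  have hftc := intervalIntegral.integral_eq_sub_of_hasDerivAt (a := 0) (b := L)
    (fun x _ => hderiv x) (Continuous.intervalIntegrable (by fun_prop) _ _)
  rw [hfper.eq, (periodic_deriv hgper).eq, sub_self, intervalIntegral.integral_add
    (Continuous.intervalIntegrable (by fun_prop) _ _)
    (Continuous.intervalIntegrable (by fun_prop) _ _)] at hftc
  exact eq_neg_of_add_eq_zero_right hftc

theorem energyForm_eq_l2Inner_of_periodic (hf : ContDiff ℝ 1 f) (hg : ContDiff ℝ 2 g)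
    (hfper : Function.Periodic f L) (hgper : Function.Periodic g L) :
    energyForm κ L f g = l2Inner L f fun x => -deriv (deriv g) x + κ • g x := by
  have := hf.continuous
  have := hg.continuous
  have : Continuous (deriv (deriv g)) := (hg.deriv' (n := 1)).continuous_deriv le_rfl
  rw [energyForm, l2Inner_deriv_deriv_of_periodic hf hg hfper hgper]
  simp only [l2Inner, inner_add_right, inner_neg_right, inner_smul_right_eq_smul]
  rw [intervalIntegral.integral_add (Continuous.intervalIntegrable (by fun_prop) _ _)
    (Continuous.intervalIntegrable (by fun_prop) _ _), intervalIntegral.integral_neg,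
    intervalIntegral.integral_smul, Complex.real_smul]

theorem integral_norm_sq_deriv_add (hf : ContDiff ℝ 1 f) (κ s : ℝ) :
    ∫ x in 0..L, (‖deriv f x‖ ^ 2 + (κ + s) * ‖f x‖ ^ 2) =
      (energyForm κ L f f).re + s * (l2Inner L f f).re := by
  have := hf.continuous
  have := hf.continuous_deriv le_rfl
  rw [intervalIntegral.integral_add (Continuous.intervalIntegrable (by fun_prop) _ _)
    (Continuous.intervalIntegrable (by fun_prop) _ _), intervalIntegral.integral_const_mul,
    re_energyForm_self, re_l2Inner_self]
  ring

-- The Sobolev inequality makes a quadratic polynomial in the spectral parameter `s` nonnegative,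
-- and the claim is the sign of its discriminant.
theorem norm_pow_four_le_K1_sq_mul (hα : 0 < α) (hβ : 0 < β) (hf : ContDiff ℝ 1 f)
    (hper : Function.Periodic f (2 * π / α)) (a : ℝ) :
    ‖f a‖ ^ 4 ≤ K1 β ^ 2 * ((l2Inner (2 * π / α) f f).re *
      (energyForm (α ^ 2 * β) (2 * π / α) f f).re) := by
  have hK := K1_pos hβ
  have hQ_nonneg := re_energyForm_self_nonneg (κ := α ^ 2 * β) (L := 2 * π / α) (by positivity)
    (by positivity) f
  have hu_nonneg : 0 ≤ (l2Inner (2 * π / α) f f).re := by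
    rw [re_l2Inner_self]
    exact intervalIntegral.integral_nonneg (by positivity) fun x _ => by positivity
  set u := (l2Inner (2 * π / α) f f).re
  set Q := (energyForm (α ^ 2 * β) (2 * π / α) f f).re
  have hquad (s : ℝ) : 0 ≤ u * (s * s) + -(2 * (‖f a‖ ^ 2 / K1 β)) * s + Q := by
    rcases le_or_gt s 0 with hs | hs
    · have : 0 ≤ ‖f a‖ ^ 2 / K1 β * -s := mul_nonneg (by positivity) (by linarith)
      nlinarith [mul_nonneg hu_nonneg (mul_self_nonneg s)]
    · let : InnerProductSpace ℝ E := InnerProductSpace.complexToReal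
      have h := norm_sq_le_K1_mul_integral hα hβ hf hper hs a
      rw [integral_norm_sq_deriv_add hf, div_mul_eq_mul_div, le_div_iff₀ (by positivity),
        ← div_le_iff₀' hK] at h
      linarith [show ‖f a‖ ^ 2 * (2 * s) / K1 β = 2 * (‖f a‖ ^ 2 / K1 β) * s by ring]
  have hdiscrim := discrim_le_zero hquad
  rw [discrim, neg_sq, mul_pow, div_pow, ← pow_mul] at hdiscrim
  rw [← div_le_iff₀' (by positivity)]
  linarith

end EnergyForm

section OrthonormalFamily

variable {E : Type*} [NormedAddCommGroup E] [InnerProductSpace ℂ E] {ι : Type*}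
  {φ : ι → ℝ → E} {α β κ L : ℝ}

/-- Orthonormality of a family of functions in `L²((0, L); E)`. -/
def L2Orthonormal [DecidableEq ι] (L : ℝ) (φ : ι → ℝ → E) : Prop :=
  ∀ i j, l2Inner L (φ i) (φ j) = if i = j then 1 else 0

variable [Fintype ι]

/-- The density `∑ₙ |⟨e, φₙ(x)⟩|²` of the family `φ` at the point `x` in the direction `e`. -/
noncomputable def directionalDensity (φ : ι → ℝ → E) (e : E) (x : ℝ) : ℝ :=
  ∑ n, ‖⟪e, φ n x⟫_ℂ‖ ^ 2

/-- The function `∑_k ⟨f_k, (-d²/dx² + κ) f_k⟩` of `x`, where `f_k = ∑ₙ ⟨φₙ(x), e_k⟩ φₙ` and `(e_k)`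
is any orthonormal basis of `E`. It is written here without reference to the basis; for an
orthonormal family its integral is the total energy of the family. -/
noncomputable def energyDensity (κ L : ℝ) (φ : ι → ℝ → E) (x : ℝ) : ℝ :=
  (∑ i, ∑ j, ⟪φ j x, φ i x⟫_ℂ * energyForm κ L (φ i) (φ j)).re

theorem directionalDensity_nonneg (φ : ι → ℝ → E) (e : E) (x : ℝ) :
    0 ≤ directionalDensity φ e x :=
  Finset.sum_nonneg fun _ _ => by positivity

theorem inner_sum_inner_smul (φ : ι → ℝ → E) (e : E) (x : ℝ) :
    ⟪e, ∑ n, ⟪φ n x, e⟫_ℂ • φ n x⟫_ℂ = directionalDensity φ e x := by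
  simp only [directionalDensity, inner_sum, inner_smul_right, Complex.ofReal_sum]
  refine Finset.sum_congr rfl fun n _ => ?_
  rw [← inner_conj_symm, Complex.conj_mul', Complex.ofReal_pow]

theorem l2Inner_sum_inner_smul [DecidableEq ι] (horth : L2Orthonormal L φ)
    (hφ : ∀ n, Continuous (φ n)) (e : E) (x : ℝ) :
    l2Inner L (fun y => ∑ n, ⟪φ n x, e⟫_ℂ • φ n y) (fun y => ∑ n, ⟪φ n x, e⟫_ℂ • φ n y) =
      directionalDensity φ e x := by
  rw [l2Inner_sum_smul hφ]
  simp only [horth _ _, mul_ite, mul_one, mul_zero, Finset.sum_ite_eq, Finset.mem_univ, if_true,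
    Complex.conj_mul', directionalDensity, Complex.ofReal_sum, Complex.ofReal_pow, norm_inner_symm]

-- The interpolation inequality is applied to `f = ∑ₙ ⟨φₙ(x), e⟩ φₙ`, for which both `⟨e, f(x)⟩` and
-- `‖f‖²` equal the density.
theorem directionalDensity_pow_three_le [DecidableEq ι] (hα : 0 < α) (hβ : 0 < β)
    (hφ : ∀ n, ContDiff ℝ 1 (φ n)) (hper : ∀ n, Function.Periodic (φ n) (2 * π / α))
    (horth : L2Orthonormal (2 * π / α) φ) {e : E} (he : ‖e‖ = 1) (x : ℝ) :
    directionalDensity φ e x ^ 3 ≤ K1 β ^ 2 * (∑ i, ∑ j, ⟪e, φ i x⟫_ℂ * ⟪φ j x, e⟫_ℂ *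
      energyForm (α ^ 2 * β) (2 * π / α) (φ i) (φ j)).re := by
  set f : ℝ → E := fun y => ∑ n, ⟪φ n x, e⟫_ℂ • φ n y with hf
  set ρ := directionalDensity φ e x with hρ
  have henergy : energyForm (α ^ 2 * β) (2 * π / α) f f = ∑ i, ∑ j, ⟪e, φ i x⟫_ℂ * ⟪φ j x, e⟫_ℂ *
      energyForm (α ^ 2 * β) (2 * π / α) (φ i) (φ j) := by
    simp only [hf, energyForm_sum_smul hφ, inner_conj_symm]
  rw [← henergy]
  have hρ_le : ρ ≤ ‖f x‖ := by
    have h := norm_inner_le_norm (𝕜 := ℂ) e (f x)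
    rw [inner_sum_inner_smul, he, one_mul, Complex.norm_real] at h
    exact (le_abs_self ρ).trans h
  rcases (directionalDensity_nonneg φ e x).eq_or_lt with hρ_zero | hρ_pos
  · rw [hρ, ← hρ_zero, zero_pow three_ne_zero]
    exact mul_nonneg (sq_nonneg _) (re_energyForm_self_nonneg (by positivity) (by positivity) f)
  · refine le_of_mul_le_mul_left ?_ hρ_pos
    calc ρ * ρ ^ 3 = ρ ^ 4 := by ring
      _ ≤ ‖f x‖ ^ 4 := by gcongr
      _ ≤ K1 β ^ 2 * ((l2Inner (2 * π / α) f f).re *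
            (energyForm (α ^ 2 * β) (2 * π / α) f f).re) :=
          norm_pow_four_le_K1_sq_mul hα hβ (by fun_prop)
            (fun y => by simp only [hf, hper _ y]) x
      _ = ρ * (K1 β ^ 2 * (energyForm (α ^ 2 * β) (2 * π / α) f f).re) := by
          rw [l2Inner_sum_inner_smul horth (fun n => (hφ n).continuous), Complex.ofReal_re]
          ring

theorem sum_orthonormalBasis_energy {m : Type*} [Fintype m] (b : OrthonormalBasis m ℂ E)
    (φ : ι → ℝ → E) (x : ℝ) :
    ∑ k, (∑ i, ∑ j, ⟪b k, φ i x⟫_ℂ * ⟪φ j x, b k⟫_ℂ * energyForm κ L (φ i) (φ j)).re =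
      energyDensity κ L φ x := by
  rw [← Complex.re_sum, Finset.sum_comm, energyDensity]
  refine congrArg Complex.re (Finset.sum_congr rfl fun i _ => ?_)
  rw [Finset.sum_comm]
  refine Finset.sum_congr rfl fun j _ => ?_
  rw [← b.sum_inner_mul_inner, Finset.sum_mul]
  exact Finset.sum_congr rfl fun k _ => by rw [mul_comm ⟪b k, _⟫_ℂ]

theorem continuous_energyDensity (hφ : ∀ n, Continuous (φ n)) :
    Continuous (energyDensity κ L φ) := by
  unfold energyDensity
  fun_prop

theorem integral_energyDensity [DecidableEq ι] (horth : L2Orthonormal L φ)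
    (hφ : ∀ n, Continuous (φ n)) :
    ∫ x in 0..L, energyDensity κ L φ x = ∑ n, (energyForm κ L (φ n) (φ n)).re := by
  have hgram (i j : ι) : ∫ x in 0..L, ⟪φ i x, φ j x⟫_ℂ = if i = j then 1 else 0 := horth i j
  have hint (i j : ι) : IntervalIntegrable
      (fun x => ⟪φ j x, φ i x⟫_ℂ * energyForm κ L (φ i) (φ j)) volume 0 L :=
    Continuous.intervalIntegrable (by fun_prop) _ _
  have hcomplex : ∫ x in 0..L, ∑ i, ∑ j, ⟪φ j x, φ i x⟫_ℂ * energyForm κ L (φ i) (φ j) =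
      ∑ n, energyForm κ L (φ n) (φ n) := by
    rw [intervalIntegral.integral_finsetSum fun i _ =>
      Continuous.intervalIntegrable (by fun_prop) _ _]
    refine Finset.sum_congr rfl fun i _ => ?_
    rw [intervalIntegral.integral_finsetSum fun j _ => hint i j]
    simp only [intervalIntegral.integral_mul_const, hgram, ite_mul, one_mul, zero_mul,
       Finset.sum_ite_eq', Finset.mem_univ, if_true]
  rw [← Complex.re_sum, ← hcomplex]
  exact Complex.reCLM.intervalIntegral_comp_comm (Continuous.intervalIntegrable (by fun_prop) _ _)

theorem mul_le_pow_three_div_add_rpow {K w u : ℝ} (hK : 0 < K) (hw : 0 ≤ w) (hu : 0 ≤ u) :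
    w * u ≤ u ^ 3 / K ^ 2 + 2 * K / (3 * √3) * w ^ (3 / 2 : ℝ) := by
  have hw_rpow : w ^ (3 / 2 : ℝ) = √w ^ 3 := by
    rw [sqrt_eq_rpow, ← rpow_natCast, ← rpow_mul hw]
    norm_num
  have hsqrt3 : √3 ^ 2 = 3 := sq_sqrt (by norm_num)
  obtain ⟨p, hp, hsqrt_w⟩ : ∃ p, 0 ≤ p ∧ √w = p * √3 / K :=
    ⟨√w * K / √3, by positivity, by field_simp⟩
  have hw_eq : w = 3 * p ^ 2 / K ^ 2 := by
    rw [← sq_sqrt hw, hsqrt_w, div_pow, mul_pow, hsqrt3]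
    ring
  have hterm : 2 * K / (3 * √3) * w ^ (3 / 2 : ℝ) = 2 * p ^ 3 / K ^ 2 := by
    rw [hw_rpow, hsqrt_w, div_pow, mul_pow, pow_succ √3, hsqrt3]
    field_simp
  have hcubic : 3 * p ^ 2 * u ≤ u ^ 3 + 2 * p ^ 3 := by
    nlinarith [mul_nonneg (sq_nonneg (u - p)) (by linarith : 0 ≤ u + 2 * p)]
  rw [hterm, hw_eq, ← add_div, div_mul_eq_mul_div]
  gcongr

theorem sum_mul_directionalDensity_le [DecidableEq ι] (hα : 0 < α) (hβ : 0 < β)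
    (hφ : ∀ n, ContDiff ℝ 1 (φ n)) (hper : ∀ n, Function.Periodic (φ n) (2 * π / α))
    (horth : L2Orthonormal (2 * π / α) φ) {m : Type*} [Fintype m] (b : OrthonormalBasis m ℂ E)
    (v : m → ℝ) (x : ℝ) :
    ∑ k, v k * directionalDensity φ (b k) x ≤
      2 * K1 β / (3 * √3) * ∑ k, max (v k) 0 ^ (3 / 2 : ℝ) +
        energyDensity (α ^ 2 * β) (2 * π / α) φ x := by
  have hK := K1_pos hβ
  rw [← sum_orthonormalBasis_energy b, Finset.mul_sum, ← Finset.sum_add_distrib]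
  refine Finset.sum_le_sum fun k _ => ?_
  have hρ := directionalDensity_nonneg φ (b k) x
  have hcube := directionalDensity_pow_three_le hα hβ hφ hper horth (b.norm_eq_one k) x
  rw [← div_le_iff₀' (by positivity)] at hcube
  calc v k * directionalDensity φ (b k) x
      ≤ max (v k) 0 * directionalDensity φ (b k) x := by
        gcongr
        exact le_max_left _ _
    _ ≤ directionalDensity φ (b k) x ^ 3 / K1 β ^ 2 +
          2 * K1 β / (3 * √3) * max (v k) 0 ^ (3 / 2 : ℝ) :=
        mul_le_pow_three_div_add_rpow hK (le_max_right _ _) hρ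
    _ ≤ _ := by linarith

end OrthonormalFamily

section HermitianMatrix

variable {m : Type*} [Fintype m] [DecidableEq m] {A : Matrix m m ℂ}

theorem inner_eigenvectorBasis_toEuclideanLin (hA : A.IsHermitian) (k : m)
    (p : EuclideanSpace ℂ m) :
    ⟪hA.eigenvectorBasis k, A.toEuclideanLin p⟫_ℂ =
      hA.eigenvalues k * ⟪hA.eigenvectorBasis k, p⟫_ℂ := by
  have heigvec : A.toEuclideanLin (hA.eigenvectorBasis k) =
      hA.eigenvalues k • hA.eigenvectorBasis k :=
    (WithLp.ofLp_injective 2) (hA.mulVec_eigenvectorBasis k)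
  rw [← Matrix.isSymmetric_toEuclideanLin_iff.2 hA, heigvec, inner_smul_left_eq_smul,
    Complex.real_smul]

theorem re_inner_toEuclideanLin (hA : A.IsHermitian) (p : EuclideanSpace ℂ m) :
    (⟪p, A.toEuclideanLin p⟫_ℂ).re =
      ∑ k, hA.eigenvalues k * ‖⟪hA.eigenvectorBasis k, p⟫_ℂ‖ ^ 2 := by
  rw [← hA.eigenvectorBasis.sum_inner_mul_inner, Complex.re_sum]
  refine Finset.sum_congr rfl fun k _ => ?_
  rw [inner_eigenvectorBasis_toEuclideanLin, mul_left_comm, Complex.re_ofReal_mul,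
    ← inner_conj_symm, Complex.conj_mul', ← Complex.ofReal_pow, Complex.ofReal_re]

theorem trace_cfc (hA : A.IsHermitian) (f : ℝ → ℝ) :
    (cfc f A).trace = ∑ i, (f (hA.eigenvalues i) : ℂ) := by
  rw [hA.cfc_eq, Matrix.IsHermitian.cfc, Unitary.conjStarAlgAut_apply, Matrix.trace_mul_cycle]
  simp

open scoped Matrix.Norms.L2Operator in
theorem continuous_sum_eigenvalues {X : Type*} [TopologicalSpace X] {V : X → Matrix m m ℂ}
    (hVc : Continuous V) (hV : ∀ x, (V x).IsHermitian) {f : ℝ → ℝ} (hf : Continuous f) :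
    Continuous fun x => ∑ i, f ((hV x).eigenvalues i) := by
  have hcfc : Continuous fun x => cfc f (V x) :=
    Continuous.cfc_of_mem_nhdsSet (p := IsSelfAdjoint) (s := Set.univ) f Filter.univ_mem hVc hV
      hf.continuousOn
  have htrace (x : X) : ∑ i, f ((hV x).eigenvalues i) = (cfc f (V x)).trace.re := by
    rw [trace_cfc (hV x), ← Complex.ofReal_sum, Complex.ofReal_re]
  simp only [htrace]
  exact Complex.continuous_re.comp hcfc.matrix_trace

end HermitianMatrix

section AizenmanLieb

open ProbabilityTheory Set

variable {k : Type*} [Fintype k] {a p q v : ℝ}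

/-- The Riesz mean `∑ₖ (vₖ - t)₊^q` of order `q` of the numbers `vₖ`. -/
noncomputable def rieszMean (q : ℝ) (v : k → ℝ) (t : ℝ) : ℝ :=
  ∑ i, max (v i - t) 0 ^ q

theorem rieszMean_nonneg (q : ℝ) (v : k → ℝ) (t : ℝ) : 0 ≤ rieszMean q v t :=
  Finset.sum_nonneg fun _ _ => by positivity

theorem continuous_rieszMean (hq : 0 ≤ q) (v : k → ℝ) : Continuous (rieszMean q v) :=
  continuous_finsetSum _ fun _ _ =>
    Continuous.rpow_const (by fun_prop) fun _ => Or.inr hq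

theorem integral_rpow_mul_sub_rpow (ha : 0 < a) (hq : 0 < q + 1) (hv : 0 < v) :
    ∫ t in 0..v, t ^ (a - 1) * (v - t) ^ q = beta a (q + 1) * v ^ (q + a) := by
  have hbeta : (beta a (q + 1) : ℂ) = Complex.betaIntegral a (q + 1) := by
    rw [Complex.betaIntegral_eq_Gamma_mul_div _ _ (by simpa using ha) (by simpa using hq), beta]
    push_cast [← Complex.Gamma_ofReal]
    rfl
  apply Complex.ofReal_injective
  calc ((∫ t in 0..v, t ^ (a - 1) * (v - t) ^ q : ℝ) : ℂ)
      = ∫ t in 0..v, (t : ℂ) ^ ((a : ℂ) - 1) * ((v : ℂ) - t) ^ ((q + 1 : ℂ) - 1) := by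
        rw [← intervalIntegral.integral_ofReal]
        refine intervalIntegral.integral_congr fun t ht => ?_
        rw [uIcc_of_le hv.le] at ht
        push_cast [Complex.ofReal_cpow ht.1, Complex.ofReal_cpow (sub_nonneg.2 ht.2)]
        rw [add_sub_cancel_right]
    _ = (v : ℂ) ^ (a + (q + 1) - 1 : ℂ) * Complex.betaIntegral a (q + 1) :=
        Complex.betaIntegral_scaled _ _ hv
    _ = ((beta a (q + 1) * v ^ (q + a) : ℝ) : ℂ) := by
        rw [← hbeta]
        push_cast [Complex.ofReal_cpow hv.le]
        ring_nf

theorem lintegral_rpow_mul_max_sub_rpow (ha : 0 < a) (hq : 0 < q) (v : ℝ) :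
    ∫⁻ t in Ioi 0, ENNReal.ofReal (t ^ (a - 1) * max (v - t) 0 ^ q) =
      ENNReal.ofReal (beta a (q + 1) * max v 0 ^ (q + a)) := by
  have hsupport : (fun t => ENNReal.ofReal (t ^ (a - 1) * max (v - t) 0 ^ q)) =
      (Iic v).indicator fun t => ENNReal.ofReal (t ^ (a - 1) * (v - t) ^ q) := by
    ext t
    rcases le_or_gt t v with ht | ht
    · rw [indicator_of_mem (mem_Iic.2 ht), max_eq_left (sub_nonneg.2 ht)]
    · rw [indicator_of_notMem (notMem_Iic.2 ht), max_eq_right (by linarith), zero_rpow hq.ne',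
        mul_zero, ENNReal.ofReal_zero]
  rw [hsupport, setLIntegral_indicator measurableSet_Iic, inter_comm, Ioi_inter_Iic]
  rcases le_or_gt v 0 with hv | hv
  · rw [Ioc_eq_empty (not_lt.2 hv), max_eq_right hv, zero_rpow (by positivity)]
    simp
  have hreal := integral_rpow_mul_sub_rpow ha (by linarith : 0 < q + 1) hv
  have hbeta := beta_pos ha (by linarith : 0 < q + 1)
  rw [intervalIntegral.integral_of_le hv.le] at hreal
  have hint : IntegrableOn (fun t => t ^ (a - 1) * (v - t) ^ q) (Ioc 0 v) :=
    Integrable.of_integral_ne_zero (by rw [hreal]; positivity)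
  rw [max_eq_left hv.le, ← hreal, ofReal_integral_eq_lintegral_ofReal hint]
  filter_upwards [ae_restrict_mem measurableSet_Ioc] with t ht
  exact mul_nonneg (rpow_nonneg ht.1.le _) (rpow_nonneg (sub_nonneg.2 ht.2) _)

theorem lintegral_rpow_mul_rieszMean (ha : 0 < a) (hq : 0 < q) (v : k → ℝ) :
    ∫⁻ t in Ioi 0, ENNReal.ofReal (t ^ (a - 1) * rieszMean q v t) =
      ENNReal.ofReal (beta a (q + 1) * rieszMean (q + a) v 0) := by
  have hbeta := beta_pos ha (by linarith : 0 < q + 1)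
  have hsum : ∫⁻ t in Ioi 0, ENNReal.ofReal (t ^ (a - 1) * rieszMean q v t) =
      ∫⁻ t in Ioi 0, ∑ i, ENNReal.ofReal (t ^ (a - 1) * max (v i - t) 0 ^ q) :=
    setLIntegral_congr_fun measurableSet_Ioi fun t ht => by
      have := rpow_nonneg (mem_Ioi.1 ht).le (a - 1)
      simp only [rieszMean, Finset.mul_sum]
      exact ENNReal.ofReal_sum_of_nonneg fun i _ => by positivity
  rw [hsum, lintegral_finsetSum _ fun i _ => by fun_prop]
  simp only [lintegral_rpow_mul_max_sub_rpow ha hq, rieszMean, sub_zero, Finset.mul_sum]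
  exact (ENNReal.ofReal_sum_of_nonneg fun i _ => by positivity).symm

variable {Y : Type*} [MeasurableSpace Y] {μ : Measure Y} [SFinite μ] {w : Y → k → ℝ} {c : ℝ}

theorem lintegral_lintegral_rpow_mul_rieszMean (ha : 0 < a) (hq : 0 < q)
    (hmeas : ∀ t, Measurable fun y => rieszMean q (w y) t) :
    ∫⁻ t in Ioi 0, ∫⁻ y, ENNReal.ofReal (t ^ (a - 1) * rieszMean q (w y) t) ∂μ =
      ∫⁻ y, ENNReal.ofReal (beta a (q + 1) * rieszMean (q + a) (w y) 0) ∂μ := by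
  have hjoint : Measurable fun z : ℝ × Y => rieszMean q (w z.2) z.1 :=
    measurable_uncurry_of_continuous_of_measurable (u := fun t y => rieszMean q (w y) t)
      (fun y => continuous_rieszMean hq.le (w y)) hmeas
  rw [lintegral_lintegral_swap (by fun_prop)]
  simp only [lintegral_rpow_mul_rieszMean ha hq]

variable {ι : Type*} [Fintype ι] {u : ι → ℝ}

theorem beta_mul_rieszMean_le (ha : 0 < a) (hp : 0 < p) (hq : 0 < q) (hc : 0 ≤ c)
    (hmeas : ∀ t, Measurable fun y => rieszMean q (w y) t)
    (hint : ∀ t, Integrable (fun y => rieszMean q (w y) t) μ)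
    (hint' : Integrable (fun y => rieszMean (q + a) (w y) 0) μ)
    (hle : ∀ t, rieszMean p u t ≤ c * ∫ y, rieszMean q (w y) t ∂μ) :
    beta a (p + 1) * rieszMean (p + a) u 0 ≤
      c * ∫ y, beta a (q + 1) * rieszMean (q + a) (w y) 0 ∂μ := by
  have hbeta := beta_pos ha (by linarith : 0 < q + 1)
  have hnonneg (y : Y) : 0 ≤ beta a (q + 1) * rieszMean (q + a) (w y) 0 :=
    mul_nonneg hbeta.le (rieszMean_nonneg _ _ _)
  rw [← ENNReal.ofReal_le_ofReal_iff (mul_nonneg hc (integral_nonneg hnonneg)),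
    ENNReal.ofReal_mul hc,
    ofReal_integral_eq_lintegral_ofReal (hint'.const_mul _) (.of_forall hnonneg),
    ← lintegral_lintegral_rpow_mul_rieszMean ha hq hmeas, ← lintegral_rpow_mul_rieszMean ha hp,
    ← lintegral_const_mul' _ _ ENNReal.ofReal_ne_top]
  refine setLIntegral_mono' measurableSet_Ioi fun t ht => ?_
  have htpow := rpow_nonneg (mem_Ioi.1 ht).le (a - 1)
  rw [← ofReal_integral_eq_lintegral_ofReal ((hint t).const_mul _)
    (.of_forall fun y => mul_nonneg htpow (rieszMean_nonneg _ _ _)), integral_const_mul,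
    ← ENNReal.ofReal_mul hc, mul_left_comm]
  exact ENNReal.ofReal_le_ofReal (mul_le_mul_of_nonneg_left (hle t) htpow)

theorem rieszMean_add_le (ha : 0 ≤ a) (hp : 0 < p) (hq : 0 < q) (hc : 0 ≤ c)
    (hmeas : ∀ t, Measurable fun y => rieszMean q (w y) t)
    (hint : ∀ t, Integrable (fun y => rieszMean q (w y) t) μ)
    (hint' : Integrable (fun y => rieszMean (q + a) (w y) 0) μ)
    (hle : ∀ t, rieszMean p u t ≤ c * ∫ y, rieszMean q (w y) t ∂μ) :
    rieszMean (p + a) u 0 ≤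
      c * (Gamma (p + a + 1) * Gamma (q + 1) / (Gamma (p + 1) * Gamma (q + a + 1))) *
        ∫ y, rieszMean (q + a) (w y) 0 ∂μ := by
  have := Gamma_pos_of_pos (by linarith : 0 < p + 1)
  have := Gamma_pos_of_pos (by linarith : 0 < q + 1)
  rcases ha.eq_or_lt with rfl | ha_pos
  · have hratio : Gamma (p + 1) * Gamma (q + 1) / (Gamma (p + 1) * Gamma (q + 1)) = 1 :=
      div_self (by positivity)
    simpa only [add_zero, hratio, mul_one] using hle 0
  · have h := beta_mul_rieszMean_le ha_pos hp hq hc hmeas hint hint' hle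
    have := Gamma_pos_of_pos ha_pos
    have := Gamma_pos_of_pos (by linarith : 0 < p + a + 1)
    rw [integral_const_mul, ← le_div_iff₀' (beta_pos ha_pos (by linarith))] at h
    refine h.trans_eq ?_
    rw [beta, beta, show a + (p + 1) = p + a + 1 by ring, show a + (q + 1) = q + a + 1 by ring]
    field_simp

end AizenmanLieb

section RieszMeans

variable {m ι : Type*} [Fintype m] [DecidableEq m]
  {V : ℝ → Matrix m m ℂ} {φ : ι → ℝ → EuclideanSpace ℂ m} {lam : ι → ℝ} {α β κ L t : ℝ}

/-- The functions `φₙ` solve the eigenvalue equations `-φₙ'' + κ φₙ - V φₙ = -λₙ φₙ`. -/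
def IsEigenfamily (κ : ℝ) (V : ℝ → Matrix m m ℂ) (lam : ι → ℝ)
    (φ : ι → ℝ → EuclideanSpace ℂ m) : Prop :=
  ∀ n x, -deriv (deriv (φ n)) x + κ • φ n x - (V x).toEuclideanLin (φ n x) = -lam n • φ n x

theorem continuous_rieszMean_eigenvalues {q : ℝ} (hVc : Continuous V)
    (hV : ∀ x, (V x).IsHermitian) (hq : 0 ≤ q) (t : ℝ) :
    Continuous fun x => rieszMean q (hV x).eigenvalues t :=
  continuous_sum_eigenvalues hVc hV (f := fun v => max (v - t) 0 ^ q)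
    (Continuous.rpow_const (by fun_prop) fun _ => Or.inr hq)

theorem sum_eigenvalues_sub_mul_directionalDensity [Fintype ι] {A : Matrix m m ℂ}
    (hA : A.IsHermitian) (φ : ι → ℝ → EuclideanSpace ℂ m) (x t : ℝ) :
    ∑ k, (hA.eigenvalues k - t) * directionalDensity φ (hA.eigenvectorBasis k) x =
      ∑ n, ((⟪φ n x, A.toEuclideanLin (φ n x)⟫_ℂ).re - t * ‖φ n x‖ ^ 2) := by
  simp only [directionalDensity, Finset.mul_sum]
  rw [Finset.sum_comm]
  simp only [re_inner_toEuclideanLin hA, ← hA.eigenvectorBasis.sum_sq_norm_inner_right (φ _ x),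
    Finset.mul_sum, ← Finset.sum_sub_distrib, sub_mul]

theorem re_inner_toEuclideanLin_sub_eq (heig : IsEigenfamily κ V lam φ) (n : ι) (x : ℝ) :
    (⟪φ n x, (V x).toEuclideanLin (φ n x)⟫_ℂ).re - t * ‖φ n x‖ ^ 2 =
      (⟪φ n x, -deriv (deriv (φ n)) x + κ • φ n x⟫_ℂ).re + (lam n - t) * ‖φ n x‖ ^ 2 := by
  have hVφ : (V x).toEuclideanLin (φ n x) =
      -deriv (deriv (φ n)) x + κ • φ n x + lam n • φ n x := by
    linear_combination (norm := module) (-1 : ℝ) • heig n x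
  have hself : (⟪φ n x, φ n x⟫_ℂ).re = ‖φ n x‖ ^ 2 := inner_self_eq_norm_sq (𝕜 := ℂ) _
  rw [hVφ, inner_add_right, Complex.add_re, inner_smul_right_eq_smul, Complex.smul_re, hself,
    smul_eq_mul]
  ring

variable [DecidableEq ι]

theorem integral_re_inner_toEuclideanLin_sub (hφ : ∀ n, ContDiff ℝ 2 (φ n))
    (hper : ∀ n, Function.Periodic (φ n) L) (horth : L2Orthonormal L φ)
    (heig : IsEigenfamily κ V lam φ) (n : ι) :
    ∫ x in 0..L, ((⟪φ n x, (V x).toEuclideanLin (φ n x)⟫_ℂ).re - t * ‖φ n x‖ ^ 2) =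
      (energyForm κ L (φ n) (φ n)).re + (lam n - t) := by
  have := (hφ n).continuous
  have : Continuous (deriv (deriv (φ n))) := ((hφ n).deriv' (n := 1)).continuous_deriv le_rfl
  have hnorm : ∫ x in 0..L, ‖φ n x‖ ^ 2 = 1 := by
    rw [← re_l2Inner_self, horth n n, if_pos rfl, Complex.one_re]
  have henergy : ∫ x in 0..L, (⟪φ n x, -deriv (deriv (φ n)) x + κ • φ n x⟫_ℂ).re =
      (energyForm κ L (φ n) (φ n)).re := by
    rw [energyForm_eq_l2Inner_of_periodic ((hφ n).of_le one_le_two) (hφ n) (hper n) (hper n)]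
    exact Complex.reCLM.intervalIntegral_comp_comm
      (Continuous.intervalIntegrable (by fun_prop) _ _)
  simp only [re_inner_toEuclideanLin_sub_eq heig]
  rw [intervalIntegral.integral_add (Continuous.intervalIntegrable (by fun_prop) _ _)
    (Continuous.intervalIntegrable (by fun_prop) _ _), intervalIntegral.integral_const_mul,
    henergy, hnorm, mul_one]

variable [Fintype ι]

theorem sum_sub_le_integral_rieszMean (hα : 0 < α) (hβ : 0 < β) (hVc : Continuous V)
    (hV : ∀ x, (V x).IsHermitian) (hφ : ∀ n, ContDiff ℝ 2 (φ n))
    (hper : ∀ n, Function.Periodic (φ n) (2 * π / α)) (horth : L2Orthonormal (2 * π / α) φ)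
    (heig : IsEigenfamily (α ^ 2 * β) V lam φ) (t : ℝ) :
    ∑ n, (lam n - t) ≤ 2 * K1 β / (3 * √3) *
      ∫ x in 0..2 * π / α, rieszMean (3 / 2) (hV x).eigenvalues t := by
  have hφc (n : ι) : Continuous (φ n) := (hφ n).continuous
  have hcont (n : ι) : Continuous fun x =>
      (⟪φ n x, (V x).toEuclideanLin (φ n x)⟫_ℂ).re - t * ‖φ n x‖ ^ 2 := by
    have : Continuous (deriv (deriv (φ n))) := ((hφ n).deriv' (n := 1)).continuous_deriv le_rfl
    simp only [re_inner_toEuclideanLin_sub_eq heig]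
    fun_prop
  have hdensity := continuous_energyDensity (κ := α ^ 2 * β) (L := 2 * π / α) hφc
  have hRiesz := continuous_rieszMean_eigenvalues (q := 3 / 2) hVc hV (by norm_num) t
  have hpointwise (x : ℝ) :
      ∑ n, ((⟪φ n x, (V x).toEuclideanLin (φ n x)⟫_ℂ).re - t * ‖φ n x‖ ^ 2) ≤
        2 * K1 β / (3 * √3) * rieszMean (3 / 2) (hV x).eigenvalues t +
          energyDensity (α ^ 2 * β) (2 * π / α) φ x := by
    rw [← sum_eigenvalues_sub_mul_directionalDensity (hV x)]
    exact sum_mul_directionalDensity_le hα hβ (fun n => (hφ n).of_le one_le_two) hper horth _ _ x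
  have hint := intervalIntegral.integral_mono_on (a := 0) (b := 2 * π / α) (μ := volume)
    (by positivity)
    ((continuous_finsetSum _ fun n _ => hcont n).intervalIntegrable _ _)
    (((hRiesz.const_mul _).fun_add hdensity).intervalIntegrable _ _) fun x _ => hpointwise x
  rw [intervalIntegral.integral_finsetSum fun n _ => (hcont n).intervalIntegrable _ _,
    intervalIntegral.integral_add ((hRiesz.const_mul _).intervalIntegrable _ _)
      (hdensity.intervalIntegrable _ _), intervalIntegral.integral_const_mul,
    integral_energyDensity horth hφc] at hint
  simp only [integral_re_inner_toEuclideanLin_sub hφ hper horth heig,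
    Finset.sum_add_distrib] at hint
  linarith

-- Discarding the `φₙ` with `λₙ ≤ t` leaves an orthonormal family of eigenfunctions.
theorem rieszMean_one_le_integral_rieszMean (hα : 0 < α) (hβ : 0 < β) (hVc : Continuous V)
    (hV : ∀ x, (V x).IsHermitian) (hφ : ∀ n, ContDiff ℝ 2 (φ n))
    (hper : ∀ n, Function.Periodic (φ n) (2 * π / α)) (horth : L2Orthonormal (2 * π / α) φ)
    (heig : IsEigenfamily (α ^ 2 * β) V lam φ) (t : ℝ) :
    rieszMean 1 lam t ≤ 2 * K1 β / (3 * √3) *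
      ∫ x in 0..2 * π / α, rieszMean (3 / 2) (hV x).eigenvalues t := by
  have hmax (n : ι) : max (lam n - t) 0 = if t < lam n then lam n - t else 0 := by
    split_ifs with h
    · exact max_eq_left (by linarith)
    · exact max_eq_right (by linarith)
  have hsubtype : rieszMean 1 lam t = ∑ n : {n // t < lam n}, (lam n - t) := by
    simp only [rieszMean, rpow_one, hmax]
    rw [← Finset.sum_filter]
    exact Finset.sum_subtype _ (by simp) _
  rw [hsubtype]
  exact sum_sub_le_integral_rieszMean (φ := fun n : {n // t < lam n} => φ n) hα hβ hVc hV
    (fun n => hφ n) (fun n => hper n)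
    (fun i j => by simp only [horth i j, Subtype.ext_iff]) (fun n => heig n) t

end RieszMeans

section LiebThirring

theorem Gamma_five_halves : Gamma (5 / 2) = 3 / 4 * √π := by
  rw [show (5 / 2 : ℝ) = 1 / 2 + 1 + 1 by norm_num, Gamma_add_one (by norm_num),
    Gamma_add_one (by norm_num), Gamma_one_half_eq]
  ring

theorem deriv_toLp {m F : Type*} [Finite m] [NormedAddCommGroup F] [NormedSpace ℝ F]
    (f : ℝ → m → F) :
    deriv (fun x => WithLp.toLp 2 (f x)) = fun x => WithLp.toLp 2 (deriv f x) := by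
  have := Fintype.ofFinite m
  ext1 x
  exact DFunLike.congr_fun
    ((PiLp.continuousLinearEquiv 2 ℝ fun _ : m => F).symm.comp_fderiv (f := f) (x := x)) 1

variable {m ι : Type*} [Fintype m] [DecidableEq m] [Fintype ι] [DecidableEq ι]

theorem rieszMean_le_integral_rieszMean_eigenvalues {α β γ : ℝ} (hα : 0 < α) (hβ : 0 < β)
    (hγ : 1 ≤ γ) {V : ℝ → Matrix m m ℂ} (hVc : Continuous V) (hV : ∀ x, (V x).IsHermitian)
    {φ : ι → ℝ → EuclideanSpace ℂ m} {lam : ι → ℝ} (hφ : ∀ n, ContDiff ℝ 2 (φ n))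
    (hper : ∀ n, Function.Periodic (φ n) (2 * π / α)) (horth : L2Orthonormal (2 * π / α) φ)
    (heig : IsEigenfamily (α ^ 2 * β) V lam φ) :
    rieszMean γ lam 0 ≤ π / √3 * K1 β * (Gamma (γ + 1) / (2 * √π * Gamma (γ + 3 / 2))) *
      ∫ x in 0..2 * π / α, rieszMean (γ + 1 / 2) (hV x).eigenvalues 0 := by
  have hK := K1_pos hβ
  have hperiod : 0 ≤ 2 * π / α := by positivity
  have hcont {q : ℝ} (hq : 0 ≤ q) (t : ℝ) := continuous_rieszMean_eigenvalues hVc hV hq t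
  have hone (t : ℝ) := rieszMean_one_le_integral_rieszMean hα hβ hVc hV hφ hper horth heig t
  simp only [intervalIntegral.integral_of_le hperiod] at hone ⊢
  have hlift := rieszMean_add_le (a := γ - 1) (by linarith) one_pos (by norm_num) (by positivity)
    (fun t => (hcont (by norm_num) t).measurable)
    (fun t => (hcont (by norm_num) t).integrableOn_Ioc)
    (hcont (by linarith) 0).integrableOn_Ioc hone
  have hconst : 2 * K1 β / (3 * √3) * (Gamma (γ + 1) * Gamma (3 / 2 + 1) /
        (Gamma (1 + 1) * Gamma (γ + 3 / 2))) =
      π / √3 * K1 β * (Gamma (γ + 1) / (2 * √π * Gamma (γ + 3 / 2))) := by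
    have := Gamma_pos_of_pos (by linarith : 0 < γ + 3 / 2)
    rw [show (3 / 2 + 1 : ℝ) = 5 / 2 by norm_num, Gamma_five_halves, one_add_one_eq_two, Gamma_two]
    field_simp
    rw [sq_sqrt pi_pos.le]
    norm_num
  rwa [show 1 + (γ - 1) = γ by ring, show 3 / 2 + (γ - 1) = γ + 1 / 2 by ring,
    show γ + 1 / 2 + 1 = γ + 3 / 2 by ring, hconst] at hlift

theorem stmt_15_general {α β : ℝ} (hα : 0 < α) (hβ : 0 < β) {L : ℝ} (hL : L = 2 * π / α)
    {γ : ℝ} (hγ : 1 ≤ γ) {V : ℝ → Matrix m m ℂ} (hVc : Continuous V)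
    (hV : ∀ x, (V x).IsHermitian) {φ : ι → ℝ → m → ℂ} (hφ : ∀ n, ContDiff ℝ 2 (φ n))
    (hper : ∀ n, Function.Periodic (φ n) L)
    (hortho : ∀ i j, ∫ x in 0..L, ∑ k, φ i x k * (starRingEnd ℂ) (φ j x k) =
      if i = j then 1 else 0)
    {lam : ι → ℝ} (heig : ∀ n x, -deriv (deriv (φ n)) x + (α ^ 2 * β) • φ n x -
      (V x).mulVec (φ n x) = -lam n • φ n x) :
    ∑ n, max (lam n) 0 ^ γ ≤ π / √3 * K1 β * (Gamma (γ + 1) / (2 * √π * Gamma (γ + 3 / 2))) *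
      ∫ x in 0..L, ∑ i, max ((hV x).eigenvalues i) 0 ^ (γ + 1 / 2) := by
  subst hL
  have horth : L2Orthonormal (2 * π / α) fun n x => WithLp.toLp 2 (φ n x) := fun i j => by
    simp only [l2Inner, EuclideanSpace.inner_toLp_toLp, dotProduct, Pi.star_apply,
      RCLike.star_def, hortho, eq_comm]
  have heigfam : IsEigenfamily (α ^ 2 * β) V lam fun n x => WithLp.toLp 2 (φ n x) := fun n x => by
    simp only [deriv_toLp, Matrix.toLpLin_toLp, ← WithLp.toLp_neg, ← WithLp.toLp_smul,
      ← WithLp.toLp_add, ← WithLp.toLp_sub, Matrix.toLin'_apply, heig]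
  simpa only [rieszMean, sub_zero] using rieszMean_le_integral_rieszMean_eigenvalues hα hβ hγ hVc hV
    (fun n => (PiLp.contDiff_toLp).comp (hφ n)) (fun n x => congrArg (WithLp.toLp 2) (hper n x))
    horth heigfam

end LiebThirring

theorem stmt_15 (α β : ℝ) (hα : 0 < α) (hβ : 0 < β) (L : ℝ) (hL : L = 2 * π / α)
    (γ : ℝ) (hγ : 1 ≤ γ) (M N : ℕ) (hM : 1 ≤ M)
    (V : ℝ → Matrix (Fin M) (Fin M) ℂ) (hVc : Continuous V)
    (hVper : Function.Periodic V L) (hV : ∀ x, (V x).PosSemidef)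
    (φ : Fin N → ℝ → Fin M → ℂ) (hφ : ∀ n, ContDiff ℝ 2 (φ n))
    (hper : ∀ n, Function.Periodic (φ n) L)
    (hortho : ∀ n m, (∫ x in (0:ℝ)..L, ∑ j, φ n x j * (starRingEnd ℂ) (φ m x j)) =
      if n = m then 1 else 0)
    (lam : Fin N → ℝ) (hlam : ∀ n, 0 < lam n)
    (heig : ∀ n x, -(deriv (deriv (φ n)) x) + (α ^ 2 * β) • φ n x - (V x).mulVec (φ n x) =
      (-(lam n)) • φ n x) :
    ∑ n, lam n ^ γ ≤ (π / Real.sqrt 3) * K1 β *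
      (Real.Gamma (γ + 1) / (2 * Real.sqrt π * Real.Gamma (γ + 3 / 2))) *
      ∫ x in (0:ℝ)..L, ∑ i, (hV x).1.eigenvalues i ^ (γ + 1 / 2) := by
  simpa only [max_eq_left (hlam _).le, max_eq_left ((hV _).eigenvalues_nonneg _)] using
    stmt_15_general hα hβ hL hγ hVc (fun x => (hV x).1) hφ hper hortho heig
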